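/- arXiv:1507.03163 — 2 statements merged into one kernel-verified Lean document; each statement's English description precedes it below -/
import Mathlib

section
/- (Theorem 4, relation for UUc) Let n ≥ 1 and g ≥ 0, and let U_g be the set of genus-g elements of the coset U = β·C_ρ in S_{2n}. Write N(T) for the number of equivalence classes of U_g under the equivalence relation generated by σ ≈ β²·σ·β⁻² together with σ ≈ t(σ) for each map t in the set T, where the possible maps are the reversal σ ↦ r·σ·r, the mirror σ ↦ σ·ρ, and the swap σ ↦ β⁻¹·ρ·σ⁻¹·β. Then: if n is even, N({reversal, mirror}) = N({mirror, swap}); and if n is odd, N({reversal, mirror}) = N({reversal, swap}). -/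
/-- The fixed-point-free involution of `Fin (2n)` pairing `2k` with `2k+1`. -/
def rho (n : ℕ) : Equiv.Perm (Fin (2 * n)) :=
  Function.Involutive.toPerm
    (fun x => ⟨if x.val % 2 = 0 then x.val + 1 else x.val - 1, by
      have := x.isLt; split_ifs with h <;> omega⟩)
    (by
      intro x
      have hx := x.isLt
      apply Fin.ext
      dsimp only
      split_ifs <;> omega)

/-- The order-reversing involution `x ↦ 2n - 1 - x` of `Fin (2n)`. -/
def rev (n : ℕ) : Equiv.Perm (Fin (2 * n)) :=
  Function.Involutive.toPerm
    (fun x => ⟨2 * n - 1 - x.val, by have := x.isLt; omega⟩)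
    (by
      intro x
      have hx := x.isLt
      apply Fin.ext
      dsimp only
      omega)

/-- The number of cycles of a permutation of `Fin (2n)`, counting fixed points. -/
def numCycles (n : ℕ) (x : Equiv.Perm (Fin (2 * n))) : ℕ :=
  Multiset.card x.cycleType + (2 * n - x.support.card)

/-- The genus-`g` part of the coset `U = β·C_ρ`. -/
def Ugen (n g : ℕ) : Set (Equiv.Perm (Fin (2 * n))) :=
  {σ | (∃ ξ ∈ Subgroup.centralizer {rho n}, σ = finRotate (2 * n) * ξ) ∧
       numCycles n σ + numCycles n (σ * rho n) + 2 * g = n + 2}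

/-- The number of equivalence classes of a set `s` of permutations under the smallest
equivalence relation identifying `σ` with `f σ` for every `f` in `F`. -/
noncomputable def numClasses (n : ℕ) (s : Set (Equiv.Perm (Fin (2 * n))))
    (F : Set (Equiv.Perm (Fin (2 * n)) → Equiv.Perm (Fin (2 * n)))) : ℕ :=
  Nat.card (Quot (fun a b : s => ∃ f ∈ F, (b : Equiv.Perm (Fin (2 * n))) = f a))

/-- Conjugation by `β²`. -/
def conjB2 (n : ℕ) : Equiv.Perm (Fin (2 * n)) → Equiv.Perm (Fin (2 * n)) :=
  fun σ => finRotate (2 * n) ^ 2 * σ * (finRotate (2 * n) ^ 2)⁻¹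

/-- The swap map `σ ↦ β⁻¹·ρ·σ⁻¹·β`. -/
def swapMap (n : ℕ) : Equiv.Perm (Fin (2 * n)) → Equiv.Perm (Fin (2 * n)) :=
  fun σ => (finRotate (2 * n))⁻¹ * rho n * σ⁻¹ * finRotate (2 * n)

/-- The mirror map `σ ↦ σ·ρ`. -/
def mirrorMap (n : ℕ) : Equiv.Perm (Fin (2 * n)) → Equiv.Perm (Fin (2 * n)) :=
  fun σ => σ * rho n

/-- The reversal map `σ ↦ r·σ·r`. -/
def revMap (n : ℕ) : Equiv.Perm (Fin (2 * n)) → Equiv.Perm (Fin (2 * n)) :=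
  fun σ => rev n * σ * rev n

/-!
Writing `σ = β ξ` with `ξ ∈ C_ρ` turns conjugation by `β²`, reversal, mirror and swap into
`ξ ↦ w ξ w⁻¹`, `ξ ↦ w⁻¹ r ξ r`, `ξ ↦ ξ ρ` and `ξ ↦ w⁻¹ ρ ξ⁻¹`, where `w = β²` lies in `C_ρ`, `ρ` is
central in `C_ρ`, and `r` inverts `w`. Hence a homomorphism `χ : C_ρ → {±1}` is invariant under the
conjugation, and gets multiplied by `χ(w)`, `χ(ρ)` and `χ(w) χ(ρ)` under reversal, mirror and swap.

For `n` even, let `χ` be the sign of the induced permutation of the `n` pairs `{2k, 2k+1}`: there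
`ρ` acts trivially and `w` as an `n`-cycle, so `χ(ρ) = 1` and `χ(w) = -1`. For `n` odd, let `χ` be
the sign on `2n` points, so `χ(ρ) = (-1)ⁿ = -1` and `χ(w) = 1`. In both cases `χ` is invariant
under the two maps common to the two equivalence relations, while either of the remaining two maps
induces on the common quotient an involution reversing `χ`. So both relations have as many classes
as there are common classes with `χ = 1`.
-/

/-- The set of classes of `X` under the equivalence relation generated by `x ∼ f x` for `f ∈ F`. -/
def Classes {X : Type*} (F : Set (X → X)) : Type _ :=
  Quot fun x y : X => ∃ f ∈ F, y = f x

namespace Classes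

variable {X : Type*} {F : Set (X → X)} {f f' : X → X} {e : X → ℤˣ}

/-- The class of a point. -/
def mk (F : Set (X → X)) (x : X) : Classes F :=
  Quot.mk _ x

theorem mk_apply (hf : f ∈ F) (x : X) : mk F (f x) = mk F x :=
  (Quot.sound ⟨f, hf, rfl⟩).symm

@[elab_as_elim]
theorem ind {P : Classes F → Prop} (h : ∀ x, P (mk F x)) (q : Classes F) : P q :=
  Quot.ind h q

/-- The map out of the set of classes induced by an invariant map. -/
def lift {Y : Type*} (φ : X → Y) (hφ : ∀ f ∈ F, ∀ x, φ (f x) = φ x) : Classes F → Y :=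
  Quot.lift φ fun x _ ⟨f, hf, hy⟩ => hy ▸ (hφ f hf x).symm

theorem lift_mk {Y : Type*} (φ : X → Y) (hφ : ∀ f ∈ F, ∀ x, φ (f x) = φ x) (x : X) :
    lift φ hφ (mk F x) = φ x :=
  rfl

/-- Dividing by `insert f F` amounts to dividing by `F` first and then by the map `fbar` induced
by `f`. -/
def insertEquiv (fbar : Classes F → Classes F) (hfbar : ∀ x, fbar (mk F x) = mk F (f x)) :
    Classes (insert f F) ≃ Classes {fbar} where
  toFun := lift (fun x => mk {fbar} (mk F x)) fun g hg x => by
    rcases hg with rfl | hg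
    · rw [← hfbar, mk_apply (Set.mem_singleton fbar)]
    · rw [mk_apply hg]
  invFun := lift (lift (mk (insert f F)) fun _ hg => mk_apply (.inr hg)) fun g hg q => by
    obtain rfl : g = fbar := hg
    induction q using ind with
    | h x => rw [hfbar, lift_mk, lift_mk, mk_apply (.inl rfl)]
  left_inv q := by
    induction q using ind with
    | h x => rfl
  right_inv q := by
    induction q using ind with
    | h q =>
      induction q using ind with
      | h x => rfl

theorem card_singleton_of_neg (hf : f.Involutive) (he : ∀ x, e (f x) = -e x) :
    Nat.card (Classes {f}) = Nat.card {x // e x = 1} := by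
  let positive (x : X) : X := if e x = 1 then x else f x
  have sign_positive (x : X) : e (positive x) = 1 := by
    rcases Int.units_eq_one_or (e x) with h | h <;> simp [positive, h, he]
  have positive_apply (x : X) : positive (f x) = positive x := by
    rcases Int.units_eq_one_or (e x) with h | h <;> simp [positive, h, he, hf x]
  have mk_positive (x : X) : mk {f} (positive x) = mk {f} x := by
    by_cases h : e x = 1
    · simp only [positive, h, if_true]
    · simp only [positive, h, if_false, mk_apply (Set.mem_singleton f)]
  refine Nat.card_congr
    { toFun := lift (fun x => ⟨positive x, sign_positive x⟩) ?_
      invFun := fun x => mk {f} x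
      left_inv := ind mk_positive
      right_inv := fun x => Subtype.ext (if_pos x.2) }
  rintro _ rfl x
  exact Subtype.ext (positive_apply x)

/-- `f` induces an involution of the classes of `F`, and it reverses the sign `e`. -/
structure FlipsSign (F : Set (X → X)) (e : X → ℤˣ) (f : X → X) : Prop where
  sign_apply (x : X) : e (f x) = -e x
  mk_apply_of_mem (t : X → X) (ht : t ∈ F) (x : X) : mk F (f (t x)) = mk F (f x)
  mk_apply_apply (x : X) : mk F (f (f x)) = mk F x

theorem FlipsSign.card_insert (hf : FlipsSign F e f) (he : ∀ t ∈ F, ∀ x, e (t x) = e x) :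
    Nat.card (Classes (insert f F)) = Nat.card {q : Classes F // lift e he q = 1} := by
  let fbar : Classes F → Classes F := lift (fun x => Classes.mk F (f x)) hf.mk_apply_of_mem
  have involutive_fbar : fbar.Involutive := ind hf.mk_apply_apply
  have sign_fbar : ∀ q, lift e he (fbar q) = -lift e he q := ind hf.sign_apply
  rw [Nat.card_congr (insertEquiv fbar fun _ => rfl),
    card_singleton_of_neg involutive_fbar sign_fbar]

theorem FlipsSign.card_insert_eq (hf : FlipsSign F e f) (hf' : FlipsSign F e f')
    (he : ∀ t ∈ F, ∀ x, e (t x) = e x) :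
    Nat.card (Classes (insert f F)) = Nat.card (Classes (insert f' F)) := by
  rw [hf.card_insert he, hf'.card_insert he]

end Classes

/-- Self-maps of `X` which, in an injective coordinate `ι` with values in a group, are given by
`x ↦ w x w⁻¹`, `x ↦ w⁻¹ r x r`, `x ↦ x p` and `x ↦ w⁻¹ p x⁻¹`, where `r` is an involution
inverting `w` and `p` is a central involution. On the coset `β C_ρ` with the coordinate
`σ ↦ β⁻¹ σ`, conjugation by `β²`, reversal, mirror and swap have this form for `w = β²` and
`p = ρ`. -/
structure CosetMoves {G X : Type*} [Group G] (w r p : G) (ι : X → G)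
    (conj reversal mirror swap : X → X) : Prop where
  r_mul_r : r * r = 1
  semiconjBy_r : SemiconjBy r w w⁻¹
  p_mul_p : p * p = 1
  commute_p (x : G) : Commute p x
  injective : ι.Injective
  coord_conj (x : X) : ι (conj x) = w * ι x * w⁻¹
  coord_reversal (x : X) : ι (reversal x) = w⁻¹ * r * ι x * r
  coord_mirror (x : X) : ι (mirror x) = ι x * p
  coord_swap (x : X) : ι (swap x) = w⁻¹ * p * (ι x)⁻¹

namespace CosetMoves

open Classes

variable {G X : Type*} [Group G] {w r p : G} {ι : X → G} {conj reversal mirror swap : X → X}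

variable (h : CosetMoves w r p ι conj reversal mirror swap)
include h

theorem r_mul_inv_w : r * w⁻¹ = w * r := by
  rw [h.semiconjBy_r.inv_right.eq, inv_inv]

theorem inv_r : r⁻¹ = r :=
  inv_eq_of_mul_eq_one_left h.r_mul_r

theorem mirror_mirror (x : X) : mirror (mirror x) = x :=
  h.injective <| by rw [h.coord_mirror, h.coord_mirror, mul_assoc, h.p_mul_p, mul_one]

theorem reversal_reversal (x : X) : reversal (reversal x) = x :=
  h.injective <| calc
    ι (reversal (reversal x)) = w⁻¹ * (r * w⁻¹) * r * ι x * (r * r) := by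
      rw [h.coord_reversal, h.coord_reversal]; group
    _ = r * r * ι x * (r * r) := by rw [h.r_mul_inv_w]; group
    _ = ι x := by rw [h.r_mul_r, one_mul, mul_one]

theorem conj_swap_swap (x : X) : conj (swap (swap x)) = x :=
  h.injective <| calc
    ι (conj (swap (swap x))) = p * ι x * p⁻¹ := by
      rw [h.coord_conj, h.coord_swap, h.coord_swap]; group
    _ = ι x := by rw [h.commute_p, mul_inv_cancel_right]

theorem mirror_conj (x : X) : mirror (conj x) = conj (mirror x) :=
  h.injective <| by
    rw [h.coord_mirror, h.coord_conj, h.coord_conj, h.coord_mirror, mul_assoc,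
      ← h.commute_p w⁻¹]
    group

theorem mirror_reversal (x : X) : mirror (reversal x) = reversal (mirror x) :=
  h.injective <| by
    rw [h.coord_mirror, h.coord_reversal, h.coord_reversal, h.coord_mirror, mul_assoc,
      ← h.commute_p r]
    group

theorem swap_conj (x : X) : swap (conj x) = conj (swap x) :=
  h.injective <| calc
    ι (swap (conj x)) = w⁻¹ * (p * w) * (ι x)⁻¹ * w⁻¹ := by rw [h.coord_swap, h.coord_conj]; group
    _ = p * (ι x)⁻¹ * w⁻¹ := by rw [h.commute_p]; group
    _ = ι (conj (swap x)) := by rw [h.coord_conj, h.coord_swap]; group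

theorem swap_mirror (x : X) : swap (mirror x) = mirror (swap x) :=
  h.injective <| calc
    ι (swap (mirror x)) = w⁻¹ * (ι x)⁻¹ := by rw [h.coord_swap, h.coord_mirror]; group
    _ = w⁻¹ * (p * p) * (ι x)⁻¹ := by rw [h.p_mul_p, mul_one]
    _ = ι (mirror (swap x)) := by
      rw [h.coord_mirror, h.coord_swap, mul_assoc (w⁻¹ * p), ← (h.commute_p (ι x)⁻¹).eq]
      simp only [mul_assoc]

theorem conj_reversal_conj (x : X) : conj (reversal (conj x)) = reversal x :=
  h.injective <| calc
    ι (conj (reversal (conj x))) = r * w * ι x * (w⁻¹ * r * w⁻¹) := by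
      rw [h.coord_conj, h.coord_reversal, h.coord_conj]; group
    _ = ι (reversal x) := by
      rw [h.coord_reversal, mul_assoc w⁻¹ r, h.r_mul_inv_w, inv_mul_cancel_left, h.semiconjBy_r.eq]

theorem conj_swap_reversal (x : X) : conj (swap (reversal x)) = reversal (swap x) :=
  h.injective <| calc
    ι (conj (swap (reversal x))) = p * r * (ι x)⁻¹ * r := by
      rw [h.coord_conj, h.coord_swap, h.coord_reversal]; simp only [mul_inv_rev, h.inv_r]; group
    _ = w⁻¹ * (r * w⁻¹) * p * (ι x)⁻¹ * r := by rw [h.r_mul_inv_w, h.commute_p]; group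
    _ = ι (reversal (swap x)) := by rw [h.coord_reversal, h.coord_swap]; group

theorem sign_conj (χ : G →* ℤˣ) (x : X) : χ (ι (conj x)) = χ (ι x) := by
  rw [h.coord_conj, map_mul, map_mul, map_inv, mul_right_comm, mul_inv_cancel, one_mul]

theorem sign_reversal (χ : G →* ℤˣ) (x : X) : χ (ι (reversal x)) = χ w * χ (ι x) := by
  rw [h.coord_reversal, map_mul, mul_comm, ← map_mul, ← mul_assoc, ← mul_assoc, h.r_mul_inv_w,
    mul_assoc w, h.r_mul_r, mul_one, map_mul]

theorem sign_mirror (χ : G →* ℤˣ) (x : X) : χ (ι (mirror x)) = χ p * χ (ι x) := by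
  rw [h.coord_mirror, map_mul, mul_comm]

theorem sign_swap (χ : G →* ℤˣ) (x : X) : χ (ι (swap x)) = χ w * χ p * χ (ι x) := by
  simp only [h.coord_swap, map_mul, map_inv, Int.units_inv_eq_self]

theorem card_classes_conj_reversal_mirror_eq_conj_mirror_swap
    {χ : G →* ℤˣ} (hp : χ p = 1) (hw : χ w = -1) :
    Nat.card (Classes {conj, reversal, mirror}) = Nat.card (Classes {conj, mirror, swap}) := by
  have sign_invariant : ∀ t ∈ ({conj, mirror} : Set (X → X)), ∀ x, χ (ι (t x)) = χ (ι x) := by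
    rintro t (rfl | rfl) x
    · exact h.sign_conj χ x
    · rw [h.sign_mirror, hp, one_mul]
  have conj_mem : conj ∈ ({conj, mirror} : Set (X → X)) := .inl rfl
  have mirror_mem : mirror ∈ ({conj, mirror} : Set (X → X)) := .inr rfl
  have flips_reversal : FlipsSign {conj, mirror} (fun x => χ (ι x)) reversal := by
    refine ⟨fun x => ?_, ?_, fun x => by rw [h.reversal_reversal]⟩
    · rw [h.sign_reversal, hw, neg_one_mul]
    · rintro t (rfl | rfl) x
      · rw [← mk_apply conj_mem, h.conj_reversal_conj]
      · rw [← h.mirror_reversal, mk_apply mirror_mem]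
  have flips_swap : FlipsSign {conj, mirror} (fun x => χ (ι x)) swap := by
    refine ⟨fun x => ?_, ?_, fun x => by rw [← mk_apply conj_mem, h.conj_swap_swap]⟩
    · rw [h.sign_swap, hw, hp, mul_one, neg_one_mul]
    · rintro t (rfl | rfl) x
      · rw [h.swap_conj, mk_apply conj_mem]
      · rw [h.swap_mirror, mk_apply mirror_mem]
  rw [Set.insert_comm conj reversal, Set.pair_comm mirror swap, Set.insert_comm conj swap]
  exact flips_reversal.card_insert_eq flips_swap sign_invariant

theorem card_classes_conj_reversal_mirror_eq_conj_reversal_swap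
    {χ : G →* ℤˣ} (hp : χ p = -1) (hw : χ w = 1) :
    Nat.card (Classes {conj, reversal, mirror}) = Nat.card (Classes {conj, reversal, swap}) := by
  have sign_invariant : ∀ t ∈ ({conj, reversal} : Set (X → X)), ∀ x, χ (ι (t x)) = χ (ι x) := by
    rintro t (rfl | rfl) x
    · exact h.sign_conj χ x
    · rw [h.sign_reversal, hw, one_mul]
  have conj_mem : conj ∈ ({conj, reversal} : Set (X → X)) := .inl rfl
  have reversal_mem : reversal ∈ ({conj, reversal} : Set (X → X)) := .inr rfl
  have flips_mirror : FlipsSign {conj, reversal} (fun x => χ (ι x)) mirror := by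
    refine ⟨fun x => ?_, ?_, fun x => by rw [h.mirror_mirror]⟩
    · rw [h.sign_mirror, hp, neg_one_mul]
    · rintro t (rfl | rfl) x
      · rw [h.mirror_conj, mk_apply conj_mem]
      · rw [h.mirror_reversal, mk_apply reversal_mem]
  have flips_swap : FlipsSign {conj, reversal} (fun x => χ (ι x)) swap := by
    refine ⟨fun x => ?_, ?_, fun x => by rw [← mk_apply conj_mem, h.conj_swap_swap]⟩
    · rw [h.sign_swap, hw, hp, one_mul, neg_one_mul]
    · rintro t (rfl | rfl) x
      · rw [h.swap_conj, mk_apply conj_mem]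
      · rw [← mk_apply conj_mem, h.conj_swap_reversal, mk_apply reversal_mem]
  rw [Set.pair_comm reversal mirror, Set.insert_comm conj mirror, Set.pair_comm reversal swap,
    Set.insert_comm conj swap]
  exact flips_mirror.card_insert_eq flips_swap sign_invariant

end CosetMoves

section Permutations

open Equiv.Perm

variable {n : ℕ}

theorem val_rho (x : Fin (2 * n)) :
    (rho n x).val = if x.val % 2 = 0 then x.val + 1 else x.val - 1 :=
  rfl

theorem val_rev (x : Fin (2 * n)) : (rev n x).val = 2 * n - 1 - x.val :=
  rfl

theorem val_finRotate {m : ℕ} (x : Fin m) :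
    (finRotate m x).val = if x.val + 1 = m then 0 else x.val + 1 := by
  cases m with
  | zero => exact x.elim0
  | succ m => rw [coe_finRotate]; simp [Fin.ext_iff]

theorem rho_mul_rho : rho n * rho n = 1 := by
  ext x
  simp only [mul_apply, val_rho, one_apply]
  split_ifs <;> omega

theorem rev_mul_rev : rev n * rev n = 1 := by
  ext x
  simp only [mul_apply, val_rev, one_apply]
  omega

theorem commute_rev_rho : Commute (rev n) (rho n) := by
  ext x
  have parity_rev : (2 * n - 1 - x.val) % 2 = 0 ↔ ¬x.val % 2 = 0 := by omega
  simp only [mul_apply, val_rev, val_rho, parity_rev]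
  split_ifs <;> omega

theorem commute_finRotate_sq_rho : Commute (finRotate (2 * n) ^ 2) (rho n) := by
  ext x
  simp only [pow_two, mul_apply, val_finRotate, val_rho]
  split_ifs <;> omega

theorem semiconjBy_rev_finRotate :
    SemiconjBy (rev n) (finRotate (2 * n)) (finRotate (2 * n))⁻¹ := by
  rw [SemiconjBy, eq_inv_mul_iff_mul_eq]
  ext x
  simp only [mul_apply, val_finRotate, val_rev]
  split_ifs <;> omega

theorem rho_apply_ne (x : Fin (2 * n)) : rho n x ≠ x := by
  rw [Ne, Fin.ext_iff, val_rho]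
  split_ifs <;> omega

theorem sign_rho : sign (rho n) = (-1) ^ n := by
  have : IsEmpty (Function.fixedPoints (rho n)) := ⟨fun x => rho_apply_ne x.1 x.2⟩
  rw [sign_of_pow_two_eq_one (by rw [pow_two, rho_mul_rho]),
    Fintype.card_eq_zero (α := Function.fixedPoints (rho n)), Fintype.card_fin,
    Nat.sub_zero, Nat.mul_div_cancel_left n two_pos]

theorem numCycles_conj (σ τ : Equiv.Perm (Fin (2 * n))) :
    numCycles n (τ * σ * τ⁻¹) = numCycles n σ := by
  rw [numCycles, cycleType_conj, card_support_conj, numCycles]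

theorem numCycles_inv (σ : Equiv.Perm (Fin (2 * n))) : numCycles n σ⁻¹ = numCycles n σ := by
  rw [numCycles, cycleType_inv, support_inv, numCycles]

end Permutations

section Pairs

variable {n : ℕ}

/-- The index `k` of the pair `{2k, 2k+1}` containing `x`. -/
def pairIndex (x : Fin (2 * n)) : Fin n :=
  ⟨x.val / 2, by omega⟩

/-- The even element `2k` of the `k`-th pair. -/
def pairFst (k : Fin n) : Fin (2 * n) :=
  ⟨2 * k.val, by omega⟩

theorem pairIndex_pairFst (k : Fin n) : pairIndex (pairFst k) = k :=
  Fin.ext (Nat.mul_div_cancel_left k.val two_pos)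

theorem pairIndex_rho (x : Fin (2 * n)) : pairIndex (rho n x) = pairIndex x := by
  ext
  simp only [pairIndex, val_rho]
  split_ifs <;> omega

theorem pairFst_pairIndex (x : Fin (2 * n)) :
    pairFst (pairIndex x) = x ∨ pairFst (pairIndex x) = rho n x := by
  simp only [Fin.ext_iff, pairFst, pairIndex, val_rho]
  split_ifs <;> omega

theorem pairIndex_apply_pairFst_pairIndex (ξ : Subgroup.centralizer {rho n}) (x : Fin (2 * n)) :
    pairIndex (ξ.1 (pairFst (pairIndex x))) = pairIndex (ξ.1 x) := by
  rcases pairFst_pairIndex x with h | h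
  · rw [h]
  · have apply_rho : ξ.1 (rho n x) = rho n (ξ.1 x) :=
      Equiv.congr_fun (Subgroup.mem_centralizer_singleton_iff.1 ξ.2) x
    rw [h, apply_rho, pairIndex_rho]

/-- The action of the centralizer of `ρ` on the `n` pairs `{2k, 2k+1}`. -/
instance pairAction : MulAction (Subgroup.centralizer {rho n}) (Fin n) where
  smul ξ k := pairIndex (ξ.1 (pairFst k))
  one_smul := pairIndex_pairFst
  mul_smul ξ η k := (pairIndex_apply_pairFst_pairIndex ξ (η.1 (pairFst k))).symm

theorem smul_eq_pairIndex (ξ : Subgroup.centralizer {rho n}) (k : Fin n) :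
    ξ • k = pairIndex (ξ.1 (pairFst k)) :=
  rfl

variable (n)

/-- `ρ` as an element of its centralizer. -/
def centralRho : Subgroup.centralizer {rho n} :=
  ⟨rho n, Subgroup.mem_centralizer_singleton_iff.2 rfl⟩

/-- The reversal `r` as an element of the centralizer of `ρ`. -/
def centralRev : Subgroup.centralizer {rho n} :=
  ⟨rev n, Subgroup.mem_centralizer_singleton_iff.2 commute_rev_rho⟩

/-- `β²` as an element of the centralizer of `ρ`. -/
def centralRotSq : Subgroup.centralizer {rho n} :=
  ⟨finRotate (2 * n) ^ 2, Subgroup.mem_centralizer_singleton_iff.2 commute_finRotate_sq_rho⟩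

/-- The sign of the permutation of the pairs `{2k, 2k+1}` induced by an element of the centralizer
of `ρ`. -/
def pairSign : Subgroup.centralizer {rho n} →* ℤˣ :=
  Equiv.Perm.sign.comp (MulAction.toPermHom _ (Fin n))

theorem pairSign_centralRho : pairSign n (centralRho n) = 1 := by
  have acts_trivially : MulAction.toPermHom _ (Fin n) (centralRho n) = 1 :=
    Equiv.ext fun k => (pairIndex_rho _).trans (pairIndex_pairFst k)
  rw [pairSign, MonoidHom.comp_apply, acts_trivially, map_one]

theorem toPermHom_centralRotSq : MulAction.toPermHom _ (Fin n) (centralRotSq n) = finRotate n := by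
  ext k
  simp only [MulAction.toPermHom_apply, MulAction.toPerm_apply, smul_eq_pairIndex, centralRotSq,
    pairIndex, pairFst, pow_two, Equiv.Perm.mul_apply, val_finRotate]
  split_ifs <;> omega

theorem pairSign_centralRotSq : pairSign n (centralRotSq n) = (-1) ^ (n - 1) := by
  rw [pairSign, MonoidHom.comp_apply, toPermHom_centralRotSq, sign_finRotate]

end Pairs

section Genus

open Subgroup

variable {n g : ℕ} {σ : Equiv.Perm (Fin (2 * n))}

theorem mem_Ugen_iff : σ ∈ Ugen n g ↔ (finRotate (2 * n))⁻¹ * σ ∈ centralizer {rho n} ∧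
    numCycles n σ + numCycles n (σ * rho n) + 2 * g = n + 2 := by
  refine and_congr_left fun _ => ⟨?_, fun hσ => ⟨_, hσ, (mul_inv_cancel_left _ σ).symm⟩⟩
  rintro ⟨ξ, hξ, rfl⟩
  rwa [inv_mul_cancel_left]

variable (σ) in
theorem inv_finRotate_mul_conjB2 : (finRotate (2 * n))⁻¹ * conjB2 n σ =
    finRotate (2 * n) ^ 2 * ((finRotate (2 * n))⁻¹ * σ) * (finRotate (2 * n) ^ 2)⁻¹ := by
  rw [conjB2]; group

variable (σ) in
theorem inv_finRotate_mul_revMap : (finRotate (2 * n))⁻¹ * revMap n σ =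
    (finRotate (2 * n) ^ 2)⁻¹ * rev n * ((finRotate (2 * n))⁻¹ * σ) * rev n := by
  have rev_mul_inv : rev n * (finRotate (2 * n))⁻¹ = finRotate (2 * n) * rev n := by
    rw [semiconjBy_rev_finRotate.inv_right.eq, inv_inv]
  rw [revMap, ← mul_assoc _ _ σ, mul_assoc _ (rev n), rev_mul_inv]; group

variable (σ) in
theorem inv_finRotate_mul_swapMap : (finRotate (2 * n))⁻¹ * swapMap n σ =
    (finRotate (2 * n) ^ 2)⁻¹ * rho n * ((finRotate (2 * n))⁻¹ * σ)⁻¹ := by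
  rw [swapMap]; group

theorem mapsTo_conjB2 : Set.MapsTo (conjB2 n) (Ugen n g) (Ugen n g) := by
  intro σ hσ
  rw [mem_Ugen_iff] at hσ ⊢
  have mul_rho : conjB2 n σ * rho n = conjB2 n (σ * rho n) := by
    rw [conjB2, mul_assoc, commute_finRotate_sq_rho.inv_left.eq, conjB2]; group
  rw [mul_rho, inv_finRotate_mul_conjB2, conjB2, conjB2, numCycles_conj, numCycles_conj]
  have hβ := (centralRotSq n).2
  exact ⟨mul_mem (mul_mem hβ hσ.1) (inv_mem hβ), hσ.2⟩

theorem mapsTo_revMap : Set.MapsTo (revMap n) (Ugen n g) (Ugen n g) := by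
  intro σ hσ
  rw [mem_Ugen_iff] at hσ ⊢
  have mul_rho : revMap n σ * rho n = revMap n (σ * rho n) := by
    rw [revMap, mul_assoc, commute_rev_rho.eq, revMap]; group
  have numCycles_revMap (τ : Equiv.Perm (Fin (2 * n))) :
      numCycles n (revMap n τ) = numCycles n τ := by
    rw [revMap, ← numCycles_conj τ (rev n), inv_eq_of_mul_eq_one_left rev_mul_rev]
  rw [mul_rho, numCycles_revMap, numCycles_revMap, inv_finRotate_mul_revMap]
  have hr := (centralRev n).2
  exact ⟨mul_mem (mul_mem (mul_mem (inv_mem (centralRotSq n).2) hr) hσ.1) hr, hσ.2⟩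

theorem mapsTo_mirrorMap : Set.MapsTo (mirrorMap n) (Ugen n g) (Ugen n g) := by
  intro σ hσ
  rw [mem_Ugen_iff] at hσ ⊢
  rw [mirrorMap, ← mul_assoc, mul_assoc σ, rho_mul_rho, mul_one, add_comm (numCycles n _)]
  exact ⟨mul_mem hσ.1 (centralRho n).2, hσ.2⟩

theorem mapsTo_swapMap : Set.MapsTo (swapMap n) (Ugen n g) (Ugen n g) := by
  intro σ hσ
  rw [mem_Ugen_iff] at hσ ⊢
  have inv_rho : (rho n)⁻¹ = rho n := inv_eq_of_mul_eq_one_left rho_mul_rho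
  have swapMap_eq_conj : swapMap n σ =
      (finRotate (2 * n))⁻¹ * (σ * rho n)⁻¹ * (finRotate (2 * n))⁻¹⁻¹ := by
    rw [swapMap, mul_inv_rev, inv_rho]; group
  have swapMap_mul_rho : swapMap n σ * rho n =
      (finRotate (2 * n))⁻¹ * σ⁻¹ * (finRotate (2 * n))⁻¹⁻¹ := by
    have commute_rho : ((finRotate (2 * n))⁻¹ * σ)⁻¹ * rho n =
        rho n * ((finRotate (2 * n))⁻¹ * σ)⁻¹ :=
      mem_centralizer_singleton_iff.1 (inv_mem hσ.1)
    rw [mul_inv_rev, inv_inv] at commute_rho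
    rw [swapMap, mul_assoc _ σ⁻¹, mul_assoc _ _ (rho n), commute_rho, mul_assoc _ (rho n),
      ← mul_assoc (rho n), rho_mul_rho]
    group
  rw [swapMap_mul_rho, inv_finRotate_mul_swapMap, swapMap_eq_conj, numCycles_conj,
    numCycles_conj, numCycles_inv, numCycles_inv, add_comm (numCycles n _)]
  exact ⟨mul_mem (mul_mem (inv_mem (centralRotSq n).2) (centralRho n).2) (inv_mem hσ.1), hσ.2⟩

variable (n g)

/-- The coordinate `σ ↦ β⁻¹ σ` on the coset `β C_ρ`, restricted to genus `g`. -/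
def cosetCoord (σ : Ugen n g) : centralizer {rho n} :=
  ⟨(finRotate (2 * n))⁻¹ * σ, (mem_Ugen_iff.1 σ.2).1⟩

theorem cosetMoves_Ugen :
    CosetMoves (centralRotSq n) (centralRev n) (centralRho n) (cosetCoord n g)
      mapsTo_conjB2.restrict mapsTo_revMap.restrict mapsTo_mirrorMap.restrict
      mapsTo_swapMap.restrict where
  r_mul_r := Subtype.ext rev_mul_rev
  semiconjBy_r := Subtype.ext <|
    (semiconjBy_rev_finRotate.pow_right 2).eq.trans (by rw [inv_pow]; rfl)
  p_mul_p := Subtype.ext rho_mul_rho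
  commute_p ξ := Subtype.ext (mem_centralizer_singleton_iff.1 ξ.2).symm
  injective σ τ h := Subtype.ext (mul_left_cancel (congrArg Subtype.val h))
  coord_conj σ := Subtype.ext (inv_finRotate_mul_conjB2 σ.1)
  coord_reversal σ := Subtype.ext (inv_finRotate_mul_revMap σ.1)
  coord_mirror σ := Subtype.ext (mul_assoc _ _ _).symm
  coord_swap σ := Subtype.ext (inv_finRotate_mul_swapMap σ.1)

end Genus

theorem numClasses_triple {n : ℕ} {s : Set (Equiv.Perm (Fin (2 * n)))}
    {f₁ f₂ f₃ : Equiv.Perm (Fin (2 * n)) → Equiv.Perm (Fin (2 * n))}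
    (h₁ : Set.MapsTo f₁ s s) (h₂ : Set.MapsTo f₂ s s) (h₃ : Set.MapsTo f₃ s s) :
    numClasses n s {f₁, f₂, f₃} = Nat.card (Classes {h₁.restrict, h₂.restrict, h₃.restrict}) := by
  simp [numClasses, Classes, Subtype.ext_iff]

/-- Theorem 4, relation for UUc: `|UUc| = |OUb|` for n even and `|UUc| = |UOb|`
for n odd. -/
theorem UUc_relations (n : ℕ) (hn : 1 ≤ n) (g : ℕ) :
    (Even n →
      numClasses n (Ugen n g) {conjB2 n, revMap n, mirrorMap n}
        = numClasses n (Ugen n g) {conjB2 n, mirrorMap n, swapMap n}) ∧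
    (Odd n →
      numClasses n (Ugen n g) {conjB2 n, revMap n, mirrorMap n}
        = numClasses n (Ugen n g) {conjB2 n, revMap n, swapMap n}) := by
  have moves := cosetMoves_Ugen n g
  rw [numClasses_triple mapsTo_conjB2 mapsTo_revMap mapsTo_mirrorMap,
    numClasses_triple mapsTo_conjB2 mapsTo_mirrorMap mapsTo_swapMap,
    numClasses_triple mapsTo_conjB2 mapsTo_revMap mapsTo_swapMap]
  refine ⟨fun even_n => ?_, fun odd_n => ?_⟩
  · have pairSign_rotSq : pairSign n (centralRotSq n) = -1 :=
      (pairSign_centralRotSq n).trans (Nat.Even.sub_odd hn even_n odd_one).neg_one_pow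
    exact moves.card_classes_conj_reversal_mirror_eq_conj_mirror_swap
      (pairSign_centralRho n) pairSign_rotSq
  · let χ : Subgroup.centralizer {rho n} →* ℤˣ := Equiv.Perm.sign.comp (Subgroup.subtype _)
    have sign_centralRho : χ (centralRho n) = -1 := sign_rho.trans odd_n.neg_one_pow
    have sign_centralRotSq : χ (centralRotSq n) = 1 := by
      simp only [χ, centralRotSq, MonoidHom.comp_apply, Subgroup.coe_subtype, map_pow,
        Int.units_sq]
    exact moves.card_classes_conj_reversal_mirror_eq_conj_reversal_swap
      sign_centralRho sign_centralRotSq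
end

section
/- Let n be a prime number, and in S_{2n} let ρ be the involution pairing 2k with 2k+1, and let C'_ρ be the subgroup of S_{2n} consisting of permutations that commute with ρ and map even elements to even elements (a subgroup isomorphic to S_n, of order n!). Then the number N of orbits of C'_ρ acting by conjugation on the set of 2n-cycles of S_{2n} satisfies N = n − 1 + (2n−1)!/n!; equivalently, N·n! = (n−1)·n! + (2n−1)!. -/
/-- The subgroup `C'_ρ` (as a set): permutations commuting with ρ and preserving
parity of labels; it is isomorphic to `S_n`. -/
def CrhoPrime (n : ℕ) : Set (Equiv.Perm (Fin (2 * n))) :=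
  {γ | γ * rho n = rho n * γ ∧
       ∀ x : Fin (2 * n), Even (x : ℕ) ↔ Even ((γ x : Fin (2 * n)) : ℕ)}

/-!
By Burnside's lemma, the number of orbits times `n!` is the number of pairs `(s, c)` where
`s ∈ S_n`, acting on the pairs `{2k, 2k+1}` as blocks, commutes with the `2n`-cycle `c`. The
centralizer of `c` is the cyclic group it generates, which acts freely, so only those `s` matter
whose cycles all have one common length `d ∣ n`. The permutations of a set of size `kd` with all
cycles of length `d` form a single conjugacy class, of size `(kd)! / (d ^ k * k!)`, and each of
the `(kd - 1)!` full cycles commutes with `φ d` of them; counting commuting pairs in two ways,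
each of them commutes with `φ d * d ^ (k - 1) * (k - 1)!` full cycles. Summing over `d ∣ n`, with
`k = n / d` for `s` and `k = 2n / d` for its action on `Fin (2n)`, gives the number of orbits for
every `n`; a prime `n` only leaves `d = 1` and `d = n`.
-/

open Equiv Equiv.Perm Finset
open scoped Nat

section ConjugationOrbits

variable {G H : Type*} [Group G] [Group H]

/-- The conjugation action of a group `G` on a conjugation-invariant subset of a group `H`, through
a homomorphism `f : G →* H`. -/
abbrev conjMulAction (f : G →* H) {P : H → Prop} (hP : ∀ t h, P (t * h * t⁻¹) ↔ P h) :
    MulAction G {h // P h} where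
  smul g h := ⟨f g * h * (f g)⁻¹, (hP _ _).2 h.2⟩
  one_smul h := Subtype.ext <| show f 1 * h * (f 1)⁻¹ = h by simp
  mul_smul g g' h := Subtype.ext <|
    show f (g * g') * h * (f (g * g'))⁻¹ = f g * (f g' * h * (f g')⁻¹) * (f g)⁻¹ by
      rw [map_mul]; group

theorem card_conj_orbits_mul_card [Fintype G] [Finite H] (f : G →* H) {P : H → Prop}
    (hP : ∀ t h, P (t * h * t⁻¹) ↔ P h) :
    Nat.card (Quot fun a b : {h // P h} => ∃ t ∈ f.range, (b : H) = t * a * t⁻¹) * Fintype.card G =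
      ∑ g, Nat.card {h // P h ∧ Commute (f g) h} := by
  classical
  let := conjMulAction f hP
  have := Fintype.ofFinite {h // P h}
  have orbits_eq : Nat.card (Quot fun a b : {h // P h} => ∃ t ∈ f.range, (b : H) = t * a * t⁻¹) =
      Fintype.card (Quotient (MulAction.orbitRel G {h // P h})) := by
    rw [← Nat.card_eq_fintype_card]
    refine Nat.card_congr (Quot.congrRight fun a b => ?_)
    rw [Setoid.comm', MulAction.orbitRel_apply]
    constructor
    · rintro ⟨_, ⟨g, rfl⟩, hb⟩
      exact ⟨g, Subtype.ext hb.symm⟩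
    · rintro ⟨g, rfl⟩
      exact ⟨f g, ⟨g, rfl⟩, rfl⟩
  have fixedBy_eq (g : G) : Fintype.card (MulAction.fixedBy {h // P h} g) =
      Nat.card {h // P h ∧ Commute (f g) h} := by
    rw [← Nat.card_eq_fintype_card]
    refine Nat.card_congr ((Equiv.subtypeEquivRight fun h => ?_).trans
      (Equiv.subtypeSubtypeEquivSubtypeInter P (Commute (f g))))
    rw [MulAction.mem_fixedBy, Subtype.ext_iff]
    exact mul_inv_eq_iff_eq_mul
  rw [orbits_eq, ← MulAction.sum_card_fixedBy_eq_card_orbits_mul_card_group]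
  exact sum_congr rfl fun g _ => fixedBy_eq g

open scoped Classical in
theorem card_filter_commute_eq_of_isConj [Fintype H] {P : H → Prop}
    (hP : ∀ t h, P (t * h * t⁻¹) ↔ P h) {a b : H} (hab : IsConj a b) :
    #{h | P h ∧ Commute a h} = #{h | P h ∧ Commute b h} := by
  obtain ⟨t, rfl⟩ := isConj_iff.1 hab
  refine card_equiv (MulAut.conj t).toEquiv fun h => ?_
  simp [hP, Commute.conj_iff]

end ConjugationOrbits

theorem factorial_mul_descFactorial_two_mul_sub_one (k : ℕ) :
    k ! * (2 * k - 1).descFactorial (k - 1) = (2 * k - 1)! := by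
  rw [← Nat.factorial_mul_descFactorial (show k - 1 ≤ 2 * k - 1 by omega),
    show 2 * k - 1 - (k - 1) = k by omega]

section Semiregular

variable {α : Type*}

/-- All cycles of `g`, fixed points included, have length `d` (are infinite if `d = 0`), so
that the group generated by `g` acts freely. These are the only `g` which commute with a
cycle moving every point. -/
def IsSemiregular (g : Perm α) (d : ℕ) : Prop :=
  ∀ x k, (g ^ k) x = x ↔ d ∣ k

theorem isSemiregular_one_iff {g : Perm α} : IsSemiregular g 1 ↔ g = 1 := by
  refine ⟨fun hg => Equiv.ext fun x => by simpa using (hg x 1).2 dvd_rfl, ?_⟩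
  rintro rfl x k
  simp

theorem IsSemiregular.apply_ne {g : Perm α} {d : ℕ} (hg : IsSemiregular g d) (hd : d ≠ 1) (x : α) :
    g x ≠ x := fun hx =>
  hd <| Nat.dvd_one.1 <| (hg x 1).1 <| by rwa [pow_one]

theorem IsSemiregular.orderOf_eq [Nonempty α] {g : Perm α} {d : ℕ} (hg : IsSemiregular g d) :
    orderOf g = d := by
  refine Nat.dvd_right_iff_eq.1 fun k => ?_
  rw [orderOf_dvd_iff_pow_eq_one, Perm.ext_iff]
  simp [hg _ k]

section CycleType

variable [Fintype α] [DecidableEq α]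

theorem pow_apply_eq_self_iff_card_support_cycleOf_dvd {g : Perm α} {x : α} (hx : g x ≠ x) (k : ℕ) :
    (g ^ k) x = x ↔ #(g.cycleOf x).support ∣ k :=
  (g.isCycleOn_support_cycleOf x).pow_apply_eq <|
    mem_support_cycleOf_iff.2 ⟨SameCycle.rfl, mem_support.2 hx⟩

theorem mem_cycleType_iff_exists_cycleOf {g : Perm α} {l : ℕ} :
    l ∈ g.cycleType ↔ ∃ x, g x ≠ x ∧ #(g.cycleOf x).support = l := by
  simp only [cycleType_def, Multiset.mem_map, mem_val, Function.comp_apply]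
  constructor
  · rintro ⟨c, hc, rfl⟩
    obtain ⟨x, hx⟩ := (mem_cycleFactorsFinset_iff.1 hc).1.nonempty_support
    refine ⟨x, mem_support.1 (mem_cycleFactorsFinset_support_le hc hx), ?_⟩
    rw [← cycle_is_cycleOf hx hc]
  · rintro ⟨x, hx, rfl⟩
    exact ⟨_, cycleOf_mem_cycleFactorsFinset_iff.2 (mem_support.2 hx), rfl⟩

namespace IsSemiregular

variable {g : Perm α} {d : ℕ}

theorem eq_of_mem_cycleType (hg : IsSemiregular g d) {l : ℕ} (hl : l ∈ g.cycleType) : l = d := by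
  obtain ⟨x, hx, rfl⟩ := mem_cycleType_iff_exists_cycleOf.1 hl
  refine Nat.dvd_right_iff_eq.1 fun k => ?_
  rw [← pow_apply_eq_self_iff_card_support_cycleOf_dvd hx, hg x k]

theorem card_cycleType_mul (hg : IsSemiregular g d) (hd : d ≠ 1) :
    g.cycleType.card * d = Fintype.card α := by
  have support_eq : g.support = univ :=
    eq_univ_of_forall fun x => mem_support.2 (hg.apply_ne hd x)
  rw [← card_univ, ← support_eq, ← sum_cycleType]
  conv_rhs => rw [Multiset.eq_replicate_card.2 fun l => hg.eq_of_mem_cycleType]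
  rw [Multiset.sum_replicate, smul_eq_mul]

end IsSemiregular

theorem isSemiregular_iff_cycleType {g : Perm α} {k d : ℕ} (hd : 2 ≤ d)
    (hα : Fintype.card α = k * d) : IsSemiregular g d ↔ g.cycleType = Multiset.replicate k d := by
  constructor
  · intro hg
    have hcard := (hg.card_cycleType_mul (by omega)).trans hα
    exact Multiset.eq_replicate.2
      ⟨Nat.eq_of_mul_eq_mul_right (by omega) hcard, fun l => hg.eq_of_mem_cycleType⟩
  · intro hg x j
    have support_eq : g.support = univ := by
      rw [← card_eq_iff_eq_univ, ← sum_cycleType, hg, hα, Multiset.sum_replicate, smul_eq_mul]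
    have hx : g x ≠ x := mem_support.1 (support_eq ▸ mem_univ x)
    have hl : #(g.cycleOf x).support ∈ g.cycleType :=
      mem_cycleType_iff_exists_cycleOf.2 ⟨x, hx, rfl⟩
    rw [hg] at hl
    rw [pow_apply_eq_self_iff_card_support_cycleOf_dvd hx, Multiset.eq_of_mem_replicate hl]

end CycleType

namespace IsSemiregular

variable {g h : Perm α} {d : ℕ}

theorem dvd_card [Fintype α] (hg : IsSemiregular g d) : d ∣ Fintype.card α := by
  classical
  obtain rfl | hd := eq_or_ne d 1
  · exact one_dvd _
  · exact Dvd.intro_left _ (hg.card_cycleType_mul hd)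

theorem pos [Finite α] [Nonempty α] (hg : IsSemiregular g d) : 0 < d :=
  hg.orderOf_eq ▸ orderOf_pos g

theorem isConj [Finite α] (hg : IsSemiregular g d) (hh : IsSemiregular h d) : IsConj g h := by
  classical
  have := Fintype.ofFinite α
  cases isEmpty_or_nonempty α
  · rw [Subsingleton.elim g h]
  have hd_pos := hg.pos
  obtain rfl | hd : d = 1 ∨ 2 ≤ d := by omega
  · rw [isSemiregular_one_iff.1 hg, isSemiregular_one_iff.1 hh]
  obtain ⟨k, hα⟩ := exists_eq_mul_left_of_dvd hg.dvd_card
  rw [isSemiregular_iff_cycleType hd hα] at hg hh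
  exact isConj_of_cycleType_eq (hg.trans hh.symm)

end IsSemiregular

variable [Fintype α] [DecidableEq α]

open scoped Classical in
theorem card_isSemiregular_mul {k d : ℕ} (hd : 0 < d) (hα : Fintype.card α = k * d) :
    #{g : Perm α | IsSemiregular g d} * (d ^ k * k !) = (k * d)! := by
  obtain rfl | hd : d = 1 ∨ 2 ≤ d := by omega
  · simp [isSemiregular_one_iff, filter_eq']
  have hcount := card_of_cycleType_mul_eq α (Multiset.replicate k d)
  rw [if_pos ⟨by simp [hα], fun a ha => (Multiset.eq_of_mem_replicate ha).symm ▸ hd⟩] at hcount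
  obtain rfl | hk := eq_or_ne k 0
  · simpa [isSemiregular_iff_cycleType hd hα, hα] using hcount
  simpa [isSemiregular_iff_cycleType hd hα, hα, Multiset.toFinset_replicate, hk] using hcount

open scoped Classical in
theorem card_isSemiregular_mul_pow_mul_factorial {k d : ℕ} (hd : 0 < d)
    (hα : Fintype.card α = k * d) :
    #{g : Perm α | IsSemiregular g d} * (d ^ (2 * k - 1) * (2 * k - 1)!) =
      d ^ (k - 1) * (2 * k - 1).descFactorial (k - 1) * (k * d)! := by
  have hpow : d ^ (2 * k - 1) = d ^ (k - 1) * d ^ k := by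
    rw [← pow_add]; congr 1; omega
  rw [hpow, ← factorial_mul_descFactorial_two_mul_sub_one, ← card_isSemiregular_mul hd hα]
  ring

end Semiregular

section FullCycles

variable {α : Type*}

section Centralizer

variable {c g : Perm α}

theorem eq_one_of_commute_isCycleOn_univ_of_apply_eq_self (hc : c.IsCycleOn Set.univ)
    (hgc : Commute g c) {x : α} (hx : g x = x) : g = 1 := by
  ext y
  obtain ⟨j, rfl⟩ := hc.2 (Set.mem_univ x) (Set.mem_univ y)
  rw [← mul_apply, (hgc.zpow_right j).eq, mul_apply, hx, one_apply]

theorem commute_isCycleOn_univ_iff_mem_zpowers [Nonempty α] (hc : c.IsCycleOn Set.univ) :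
    Commute g c ↔ g ∈ Subgroup.zpowers c := by
  constructor
  · intro hgc
    obtain ⟨x⟩ := ‹Nonempty α›
    obtain ⟨i, hi⟩ := hc.2 (Set.mem_univ x) (Set.mem_univ (g x))
    refine ⟨i, inv_mul_eq_one.1 <| eq_one_of_commute_isCycleOn_univ_of_apply_eq_self hc (x := x)
      (((Commute.refl c).zpow_left i).inv_left.mul_left hgc) ?_⟩
    rw [mul_apply, ← hi, Perm.inv_eq_iff_eq]
  · rintro ⟨i, rfl⟩
    exact (Commute.refl c).zpow_left i

theorem isSemiregular_orderOf_of_commute_isCycleOn_univ (hc : c.IsCycleOn Set.univ)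
    (hgc : Commute g c) : IsSemiregular g (orderOf g) := by
  intro x k
  rw [orderOf_dvd_iff_pow_eq_one]
  exact ⟨eq_one_of_commute_isCycleOn_univ_of_apply_eq_self hc (hgc.pow_left k),
    fun h => by rw [h, one_apply]⟩

end Centralizer

variable [Fintype α]

theorem orderOf_eq_card_of_isCycleOn_univ [Nonempty α] {c : Perm α} (hc : c.IsCycleOn Set.univ) :
    orderOf c = Fintype.card α :=
  IsSemiregular.orderOf_eq fun x _ =>
    IsCycleOn.pow_apply_eq (s := univ) (by rwa [coe_univ]) (mem_univ x)

variable [DecidableEq α]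

open scoped Classical in
theorem card_isSemiregular_commute [Nonempty α] {c : Perm α} (hc : c.IsCycleOn Set.univ) {d : ℕ}
    (hd : d ∣ Fintype.card α) : #{g : Perm α | IsSemiregular g d ∧ Commute g c} = φ d := by
  have isSemiregular_iff {g : Perm α} (hg : g ∈ Subgroup.zpowers c) :
      IsSemiregular g d ↔ orderOf g = d := by
    refine ⟨fun h => h.orderOf_eq, ?_⟩
    rintro rfl
    exact isSemiregular_orderOf_of_commute_isCycleOn_univ hc
      ((commute_isCycleOn_univ_iff_mem_zpowers hc).2 hg)
  have card_orderOf_eq : #{z : Subgroup.zpowers c | orderOf z = d} = φ d :=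
    IsCyclic.card_orderOf_eq_totient <| by
      rwa [Fintype.card_zpowers, orderOf_eq_card_of_isCycleOn_univ hc]
  rw [← card_orderOf_eq, ← card_map (Function.Embedding.subtype _)]
  congr 1
  ext g
  simp only [mem_filter, mem_univ, true_and, mem_map, Function.Embedding.subtype_apply,
    Subtype.exists, Subgroup.orderOf_mk, exists_and_left, exists_prop, exists_eq_right_right,
    commute_isCycleOn_univ_iff_mem_zpowers hc]
  exact and_congr_left isSemiregular_iff

theorem isCycleOn_univ_of_cycleType {c : Perm α} (hc : c.cycleType = {Fintype.card α}) :
    c.IsCycleOn Set.univ := by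
  have isCycle : c.IsCycle := by rw [← card_cycleType_eq_one, hc, Multiset.card_singleton]
  have support_eq : c.support = univ := by
    rw [← card_eq_iff_eq_univ, ← sum_cycleType, hc, Multiset.sum_singleton]
  rw [← coe_univ, ← support_eq, coe_support_eq_set_support]
  exact isCycle.isCycleOn

theorem card_fullCycles [Nontrivial α] :
    #{c : Perm α | c.cycleType = {Fintype.card α}} = (Fintype.card α - 1)! := by
  rw [card_of_cycleType_singleton Fintype.one_lt_card le_rfl, Nat.choose_self, mul_one]

open scoped Classical in
theorem card_isSemiregular_mul_card_commute [Nontrivial α] {g : Perm α} {d : ℕ}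
    (hg : IsSemiregular g d) :
    #{h : Perm α | IsSemiregular h d} *
        #{c : Perm α | c.cycleType = {Fintype.card α} ∧ Commute g c} =
      (Fintype.card α - 1)! * φ d := by
  rw [← card_fullCycles]
  refine card_mul_eq_card_mul Commute (fun h hh => ?_) (fun c hc => ?_)
  · rw [bipartiteAbove, filter_filter]
    have hP (t c : Perm α) : (t * c * t⁻¹).cycleType = {Fintype.card α} ↔
        c.cycleType = {Fintype.card α} := by rw [cycleType_conj]
    convert card_filter_commute_eq_of_isConj (P := fun c => c.cycleType = {Fintype.card α}) hP
      ((mem_filter.1 hh).2.isConj hg)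
  · rw [bipartiteBelow, filter_filter]
    exact card_isSemiregular_commute (isCycleOn_univ_of_cycleType (mem_filter.1 hc).2) hg.dvd_card

open scoped Classical in
theorem card_fullCycles_commute [Nontrivial α] {g : Perm α} {k d : ℕ}
    (hα : Fintype.card α = k * d) (hg : IsSemiregular g d) :
    #{c : Perm α | c.cycleType = {Fintype.card α} ∧ Commute g c} =
      φ d * d ^ (k - 1) * (k - 1)! := by
  have hα_pos : 0 < k * d := hα ▸ Fintype.card_pos
  have hk : k ≠ 0 := (pos_of_mul_pos_left hα_pos d.zero_le).ne'
  have count_mul := card_isSemiregular_mul_card_commute hg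
  rw [hα] at count_mul ⊢
  refine Nat.eq_of_mul_eq_mul_left (Nat.factorial_pos (k * d)) ?_
  calc (k * d)! * #{c : Perm α | c.cycleType = {k * d} ∧ Commute g c}
    _ = d ^ k * k ! * ((k * d - 1)! * φ d) := by
      rw [← card_isSemiregular_mul hg.pos hα, ← count_mul]; ring
    _ = k * d * (k * d - 1)! * (φ d * d ^ (k - 1) * (k - 1)!) := by
      rw [← Nat.mul_factorial_pred hk, ← mul_pow_sub_one hk]; ring
    _ = (k * d)! * (φ d * d ^ (k - 1) * (k - 1)!) := by
      rw [Nat.mul_factorial_pred hα_pos.ne']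

end FullCycles

open scoped Classical in
theorem sum_card_fullCycles_commute {α β : Type*} [Fintype α] [DecidableEq α] [Nonempty α]
    [Fintype β] [DecidableEq β] [Nontrivial β] {f : Perm α → Perm β}
    (hf : ∀ s d, IsSemiregular (f s) d ↔ IsSemiregular s d) :
    ∑ s, #{c : Perm β | c.cycleType = {Fintype.card β} ∧ Commute (f s) c} =
      ∑ d ∈ (Fintype.card α).divisors, #{s : Perm α | IsSemiregular s d} *
        (φ d * d ^ (Fintype.card β / d - 1) * (Fintype.card β / d - 1)!) := by
  have isSemiregular_of_ne_zero (s : Perm α)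
      (hs : #{c : Perm β | c.cycleType = {Fintype.card β} ∧ Commute (f s) c} ≠ 0) :
      IsSemiregular s (orderOf s) := by
    obtain ⟨c, hc⟩ := card_ne_zero.1 hs
    obtain ⟨hc, hsc⟩ := (mem_filter.1 hc).2
    have h := (hf _ _).1 (isSemiregular_orderOf_of_commute_isCycleOn_univ
      (isCycleOn_univ_of_cycleType hc) hsc)
    rwa [h.orderOf_eq]
  have filter_eq (d : ℕ) :
      {s ∈ ({s : Perm α | IsSemiregular s (orderOf s)} : Finset _) | orderOf s = d} =
        ({s : Perm α | IsSemiregular s d} : Finset _) := by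
    ext s
    simp only [mem_filter, mem_univ, true_and]
    exact ⟨fun h => h.2 ▸ h.1, fun h => by simp [h.orderOf_eq, h]⟩
  rw [← sum_filter_of_ne fun s _ => isSemiregular_of_ne_zero s, ← sum_fiberwise_of_maps_to
    fun s hs => Nat.mem_divisors.2 ⟨(mem_filter.1 hs).2.dvd_card, Fintype.card_ne_zero⟩]
  refine sum_congr rfl fun d _ => ?_
  rw [filter_eq, ← smul_eq_mul]
  refine sum_eq_card_nsmul fun s hs => ?_
  have hfs := (hf s d).2 (mem_filter.1 hs).2
  exact card_fullCycles_commute (Nat.div_mul_cancel hfs.dvd_card).symm hfs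

section Doubling

variable {n : ℕ}

/-- The bijection `(k, b) ↦ 2 * k + b`, whose fibres over `Fin n` are the pairs swapped by
`rho n`. -/
def pairEquiv (n : ℕ) : Fin n × Fin 2 ≃ Fin (2 * n) :=
  finProdFinEquiv.trans (finCongr (Nat.mul_comm n 2))

theorem pairEquiv_val (k : Fin n) (b : Fin 2) : (pairEquiv n (k, b) : ℕ) = b + 2 * k := rfl

theorem even_pairEquiv_iff (k : Fin n) (b : Fin 2) :
    Even (pairEquiv n (k, b) : ℕ) ↔ b = 0 := by
  rw [pairEquiv_val]
  fin_cases b <;> simp [Nat.even_add]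

theorem rho_pairEquiv (k : Fin n) (b : Fin 2) :
    rho n (pairEquiv n (k, b)) = pairEquiv n (k, b.rev) := by
  apply Fin.ext
  fin_cases b <;> simp [rho, Function.Involutive.toPerm, pairEquiv_val, add_comm]

/-- The isomorphism `Perm (Fin n) ≃ C'_ρ`, as a homomorphism into `Perm (Fin (2 * n))`: a
permutation of the indices `k` moves the pairs `{2 * k, 2 * k + 1}` as blocks, preserving parity. -/
def double (n : ℕ) : Perm (Fin n) →* Perm (Fin (2 * n)) where
  toFun s := (pairEquiv n).permCongr (s.prodCongr (Equiv.refl _))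
  map_one' := by simp [Equiv.ext_iff, permCongr_apply]
  map_mul' s t := by simp [Equiv.ext_iff, permCongr_apply, Prod.map]

theorem double_apply (s : Perm (Fin n)) (k : Fin n) (b : Fin 2) :
    double n s (pairEquiv n (k, b)) = pairEquiv n (s k, b) := by
  simp [double, permCongr_apply]

theorem isSemiregular_double_iff (s : Perm (Fin n)) (d : ℕ) :
    IsSemiregular (double n s) d ↔ IsSemiregular s d := by
  simp only [IsSemiregular, ← map_pow, (pairEquiv n).surjective.forall, Prod.forall, double_apply,
    (pairEquiv n).injective.eq_iff, Prod.mk.injEq, and_true, forall_const]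

theorem double_mem_CrhoPrime (s : Perm (Fin n)) : double n s ∈ CrhoPrime n := by
  refine ⟨Equiv.ext fun x => ?_, fun x => ?_⟩ <;>
    obtain ⟨⟨k, b⟩, rfl⟩ := (pairEquiv n).surjective x
  · simp only [mul_apply, rho_pairEquiv, double_apply]
  · simp only [double_apply, even_pairEquiv_iff]

theorem exists_apply_pairEquiv_of_mem_CrhoPrime {γ : Perm (Fin (2 * n))} (hγ : γ ∈ CrhoPrime n)
    (k : Fin n) : ∃ j, ∀ b, γ (pairEquiv n (k, b)) = pairEquiv n (j, b) := by
  obtain ⟨⟨j, b⟩, hj⟩ := (pairEquiv n).surjective (γ (pairEquiv n (k, 0)))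
  have hb : b = 0 := by
    rw [← even_pairEquiv_iff j, hj, ← hγ.2, even_pairEquiv_iff]
  subst hb
  refine ⟨j, Fin.forall_fin_two.2 ⟨hj.symm, ?_⟩⟩
  have hcomm : γ (rho n (pairEquiv n (k, 0))) = rho n (γ (pairEquiv n (k, 0))) :=
    congrArg (· (pairEquiv n (k, 0))) hγ.1
  rwa [← hj, rho_pairEquiv, rho_pairEquiv] at hcomm

theorem mem_range_double_iff {γ : Perm (Fin (2 * n))} : γ ∈ (double n).range ↔ γ ∈ CrhoPrime n := by
  constructor
  · rintro ⟨s, rfl⟩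
    exact double_mem_CrhoPrime s
  · intro hγ
    choose f hf using exists_apply_pairEquiv_of_mem_CrhoPrime hγ
    have f_injective : Function.Injective f := fun k l hkl => by
      have : γ (pairEquiv n (k, 0)) = γ (pairEquiv n (l, 0)) := by rw [hf, hf, hkl]
      simpa using this
    refine ⟨Equiv.ofBijective f f_injective.bijective_of_finite, Equiv.ext fun x => ?_⟩
    obtain ⟨⟨k, b⟩, rfl⟩ := (pairEquiv n).surjective x
    rw [double_apply, hf, ofBijective_apply]

end Doubling

theorem card_orbits_cyclic_of_prime_general (n : ℕ) (hn : 0 < n) :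
    Nat.card (Quot (fun π π' : {π : Equiv.Perm (Fin (2 * n)) // π.cycleType = {2 * n}} =>
        ∃ γ ∈ CrhoPrime n, (π' : Equiv.Perm (Fin (2 * n))) = γ * π * γ⁻¹)) =
      ∑ d ∈ n.divisors, φ d * d ^ (n / d - 1) * (2 * (n / d) - 1).descFactorial (n / d - 1) := by
  classical
  have : NeZero n := ⟨hn.ne'⟩
  have : Nontrivial (Fin (2 * n)) := Fin.nontrivial_iff_two_le.2 (by omega)
  have burnside := card_conj_orbits_mul_card (double n) (P := fun π => π.cycleType = {2 * n})
    fun t π => by rw [cycleType_conj]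
  have fixed_points := sum_card_fullCycles_commute (isSemiregular_double_iff (n := n))
  simp only [mem_range_double_iff, Fintype.card_perm, Fintype.card_fin, Nat.card_eq_fintype_card,
    Fintype.card_subtype] at burnside fixed_points
  refine Nat.eq_of_mul_eq_mul_right n.factorial_pos ?_
  rw [sum_mul, burnside, fixed_points]
  refine sum_congr rfl fun d hd => ?_
  have hdn : n / d * d = n := Nat.div_mul_cancel (Nat.dvd_of_mem_divisors hd)
  have hcount := card_isSemiregular_mul_pow_mul_factorial (Nat.pos_of_mem_divisors hd)
    ((Fintype.card_fin n).trans hdn.symm)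
  rw [hdn] at hcount
  rw [Nat.mul_div_assoc 2 (Nat.dvd_of_mem_divisors hd), mul_assoc (φ d), mul_left_comm, hcount]
  ring

/-- For n prime, the number N of orbits of `C'_ρ` acting by conjugation on the
2n-cycles of the symmetric group on `Fin (2n)` satisfies
`N·n! = (n−1)·n! + (2n−1)!`, i.e. `N = n − 1 + (2n−1)!/n!`. -/
theorem card_orbits_cyclic_of_prime (n : ℕ) (hp : Nat.Prime n) :
    Nat.card (Quot (fun π π' : {π : Equiv.Perm (Fin (2 * n)) // π.cycleType = {2 * n}} =>
        ∃ γ ∈ CrhoPrime n, (π' : Equiv.Perm (Fin (2 * n))) = γ * π * γ⁻¹))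
        * n.factorial
      = (n - 1) * n.factorial + (2 * n - 1).factorial := by
  rw [card_orbits_cyclic_of_prime_general n hp.pos, hp.divisors, sum_pair hp.one_lt.ne,
    ← factorial_mul_descFactorial_two_mul_sub_one]
  simp only [Nat.totient_one, Nat.totient_prime hp, Nat.div_one, Nat.div_self hp.pos, one_pow,
    tsub_self, pow_zero, Nat.descFactorial_zero]
  ring
end
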